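/- arXiv:1606.09060 — 5 statements merged into one kernel-verified Lean document; each statement's English description precedes it below -/
import Mathlib

section
/- Let E be a normed vector space over ℂ, let ι be an index type, and let v : ι → (E → E) be a family of vector fields, each differentiable on E. Assume the family is involutive in the pointwise sense: for all i, j ∈ ι and all x ∈ E, the bracket [vᵢ,vⱼ](x) lies in the ℂ-linear span of {v_k(x) : k ∈ ι}. Let ω : E → (E →L[ℂ] ℂ) be a differentiable 1-form with ω(y)(vᵢ(y)) = 0 for all i ∈ ι and all y ∈ E. Then dω(x)(vᵢ(x), vⱼ(x)) = 0 for all i, j ∈ ι and all x ∈ E. -/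
/-!
Evaluate `dω` on members `v₀, …, vₙ` of the family by Cartan's formula
`dω(v₀, …, vₙ) = ∑ ± vᵢ(ω(v₀, …, v̂ᵢ, …, vₙ)) + ∑ ± ω([vᵢ, vⱼ], v₀, …, v̂ᵢ, …, v̂ⱼ, …, vₙ)`.
The first sum differentiates functions that vanish identically. In the second, `[vᵢ, vⱼ]` is
pointwise a linear combination of members of the family, so each term vanishes by linearity of `ω`
in its first argument. The theorem is the case `n = 1`.
-/

open VectorField
open scoped Topology

theorem map_vecCons_eq_zero_of_mem_span_range {R M N ι : Type*} [Semiring R]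
    [AddCommMonoid M] [Module R M] [AddCommMonoid N] [Module R N] {n : ℕ} {w : ι → M}
    {f : MultilinearMap R (fun _ : Fin (n + 1) ↦ M) N} (hf : ∀ k : Fin (n + 1) → ι, f (w ∘ k) = 0)
    {u : M} (hu : u ∈ Submodule.span R (Set.range w)) (l : Fin n → ι) :
    f (Matrix.vecCons u (w ∘ l)) = 0 := by
  let g : M →ₗ[R] N := f.toLinearMap (Matrix.vecCons 0 (w ∘ l)) 0
  have hg (a : M) : g a = f (Matrix.vecCons a (w ∘ l)) :=
    congrArg f (Fin.update_cons_zero ..)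
  have hzero : Set.EqOn g 0 (Set.range w) := by
    rintro _ ⟨q, rfl⟩
    rw [hg, Matrix.vecCons, ← Fin.comp_cons, hf, Pi.zero_apply]
  rw [← hg]
  exact LinearMap.eqOn_span (g := 0) hzero hu

section ExteriorDerivative

variable {𝕜 E F : Type*} [NontriviallyNormedField 𝕜] [NormedAddCommGroup E] [NormedSpace 𝕜 E]
  [NormedAddCommGroup F] [NormedSpace 𝕜 F]

theorem extDeriv_ofSubsingletonLIE_comp_apply (ω : E → E →L[𝕜] F) (x : E) (a : Fin 2 → E) :
    extDeriv (ContinuousAlternatingMap.ofSubsingletonLIE (0 : Fin 1) ∘ ω) x a =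
      fderiv 𝕜 ω x (a 0) (a 1) - fderiv 𝕜 ω x (a 1) (a 0) := by
  rw [extDeriv, LinearIsometryEquiv.comp_fderiv]
  simp [ContinuousAlternatingMap.alternatizeUncurryFin_apply, Fin.removeNth, sub_eq_add_neg]

theorem dOmega_vanishes_on_involutive_family_general {ι : Type*} {n : ℕ} {v : ι → E → E}
    {ω : E → E [⋀^Fin (n + 1)]→L[𝕜] F} {x : E} (hv : ∀ i, DifferentiableAt 𝕜 (v i) x)
    (hinv : ∀ i j, lieBracket 𝕜 (v i) (v j) x ∈ Submodule.span 𝕜 (Set.range fun k ↦ v k x))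
    (hω : DifferentiableAt 𝕜 ω x)
    (hann : ∀ k : Fin (n + 1) → ι, ∀ᶠ y in 𝓝 x, ω y (fun i ↦ v (k i) y) = 0)
    (k : Fin (n + 2) → ι) :
    extDeriv ω x (fun i ↦ v (k i) x) = 0 := by
  have hderiv (i : Fin (n + 2)) :
      fderiv 𝕜 (fun y ↦ ω y (i.removeNth fun j ↦ v (k j) y)) x = 0 := by
    have hzero : (fun y ↦ ω y (i.removeNth fun j ↦ v (k j) y)) =ᶠ[𝓝 x] fun _ ↦ 0 :=
      hann (i.removeNth k)
    rw [hzero.fderiv_eq, fderiv_fun_const, Pi.zero_apply]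
  have hbracket (i j : ι) (l : Fin n → ι) :
      ω x (Matrix.vecCons (lieBracket 𝕜 (v i) (v j) x) fun p ↦ v (l p) x) = 0 :=
    map_vecCons_eq_zero_of_mem_span_range (w := fun i ↦ v i x)
      (f := (ω x).toMultilinearMap) (fun m ↦ (hann m).self_of_nhds) (hinv i j) l
  rw [extDeriv_apply_vectorField (V := fun i ↦ v (k i)) hω fun i ↦ hv (k i)]
  simp only [hderiv, zero_apply, smul_zero, Finset.sum_const_zero, zero_sub, neg_eq_zero]
  refine Finset.sum_eq_zero fun i _ ↦ Finset.sum_eq_zero fun j _ ↦ ?_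
  exact smul_eq_zero_of_right _ (hbracket _ _ (j.removeNth (i.castSucc.removeNth k)))

end ExteriorDerivative

/-- If a family of vector fields is involutive (all brackets lie pointwise in the
span of the family), then any differentiable 1-form `ω` annihilating the family
satisfies `dω(x)(vᵢ(x), vⱼ(x)) = 0` for all `i, j, x`, where
`dω(x)(a,b) = (D_xω(a))(b) − (D_xω(b))(a)` and
`[vᵢ,vⱼ](x) = D_x vⱼ(vᵢ(x)) − D_x vᵢ(vⱼ(x))`. -/
theorem dOmega_vanishes_on_involutive_family
    {E : Type*} [NormedAddCommGroup E] [NormedSpace ℂ E]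
    {ι : Type*} (v : ι → E → E)
    (hv : ∀ i, Differentiable ℂ (v i))
    (hinv : ∀ i j : ι, ∀ x : E,
      (fderiv ℂ (v j) x (v i x) - fderiv ℂ (v i) x (v j x))
        ∈ Submodule.span ℂ (Set.range fun k => v k x))
    (ω : E → (E →L[ℂ] ℂ)) (hω : Differentiable ℂ ω)
    (hann : ∀ (i : ι) (y : E), ω y (v i y) = 0) :
    ∀ (i j : ι) (x : E),
      (fderiv ℂ ω x (v i x)) (v j x) - (fderiv ℂ ω x (v j x)) (v i x) = 0 := by
  intro i j x
  exact (extDeriv_ofSubsingletonLIE_comp_apply ω x fun p ↦ v (![i, j] p) x).symm.trans <|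
    dOmega_vanishes_on_involutive_family_general (fun k ↦ hv k x) (fun k l ↦ hinv k l x)
      ((ContinuousAlternatingMap.ofSubsingletonLIE (0 : Fin 1)).differentiable.comp hω x)
      (fun k ↦ .of_forall fun y ↦ hann (k 0) y) ![i, j]
end

section
/- Let U ⊆ ℂⁿ be an open set and let v₁, …, v_r : U → ℂⁿ be holomorphic vector fields such that the vectors v₁(x), …, v_r(x) are linearly independent over ℂ for every x ∈ U. Assume that for every open set V ⊆ U, every holomorphic 1-form ω : V → (ℂⁿ →L[ℂ] ℂ) satisfying ω(y)(vᵢ(y)) = 0 for all i and all y ∈ V, and every x ∈ V, one has dω(x)(vᵢ(x), vⱼ(x)) = 0 for all i, j. Then for every x ∈ U and all i, j, the bracket [vᵢ,vⱼ](x) lies in the ℂ-linear span of {v₁(x), …, v_r(x)}. -/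
/-!
By Cartan's formula, a 1-form `ω` annihilating `v` and `w` near `x` satisfies
`dω(v, w) = -ω([v, w])` at `x`. If a bracket were outside the span of the fields at `x`, some
functional `f` would vanish on that span but not on the bracket, so it is enough to extend `f` to a
local 1-form annihilating all the fields. Linear independence provides operators `Φ y`,
differentiable in `y`, with `Φ x = 1` and `Φ y (v k x) = v k y`; near `x` they are invertible, and
`ω y = f ∘ (Φ y)⁻¹` is such an extension.
-/

open Filter Topology VectorField
open scoped Ring

section SeparatingDual

variable {𝕜 E : Type*} [Field 𝕜] [TopologicalSpace 𝕜] [IsTopologicalRing 𝕜]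
  [AddCommGroup E] [TopologicalSpace E] [Module 𝕜 E] [SeparatingDual 𝕜 E]

theorem exists_strongDual_eq_of_finiteDimensional (p : Submodule 𝕜 E) [FiniteDimensional 𝕜 p]
    (f : E →ₗ[𝕜] 𝕜) : ∃ g : StrongDual 𝕜 E, ∀ y ∈ p, g y = f y := by
  obtain ⟨g, hg⟩ := SeparatingDual.dualMap_surjective_iff.2 p.injective_subtype (f.domRestrict p)
  exact ⟨g, fun y hy => LinearMap.congr_fun hg ⟨y, hy⟩⟩

theorem exists_strongDual_ne_zero_of_notMem {p : Submodule 𝕜 E} [FiniteDimensional 𝕜 p] {b : E}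
    (hb : b ∉ p) : ∃ g : StrongDual 𝕜 E, g b ≠ 0 ∧ ∀ y ∈ p, g y = 0 := by
  obtain ⟨f, hfb, hfp⟩ := Submodule.exists_le_ker_of_notMem hb
  obtain ⟨g, hg⟩ := exists_strongDual_eq_of_finiteDimensional (p ⊔ 𝕜 ∙ b) f
  have hb_mem : b ∈ p ⊔ 𝕜 ∙ b := Submodule.mem_sup_right (Submodule.mem_span_singleton_self b)
  refine ⟨g, by rwa [hg b hb_mem], fun y hy => ?_⟩
  rw [hg y (Submodule.mem_sup_left hy)]
  exact hfp hy

theorem exists_strongDual_apply_eq_of_linearIndependent {ι : Type*} [Finite ι] {u : ι → E}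
    (hu : LinearIndependent 𝕜 u) (c : ι → 𝕜) : ∃ g : StrongDual 𝕜 E, ∀ i, g (u i) = c i := by
  obtain ⟨g, hg⟩ := SeparatingDual.dualMap_surjective_iff.2 hu (Finsupp.linearCombination 𝕜 c)
  refine ⟨g, fun i => ?_⟩
  simpa using LinearMap.congr_fun hg (Finsupp.single i 1)

end SeparatingDual

section ExteriorDerivative

variable {𝕜 E F : Type*} [NontriviallyNormedField 𝕜]
  [NormedAddCommGroup E] [NormedSpace 𝕜 E] [NormedAddCommGroup F] [NormedSpace 𝕜 F]

/-- The exterior derivative `dω(x)(a, b)` of a vector-valued 1-form `ω`. Mathlib's `extDeriv` takes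
forms valued in alternating maps; here 1-forms are valued in continuous linear maps. -/
noncomputable def oneFormExtDeriv (ω : E → E →L[𝕜] F) (x a b : E) : F :=
  fderiv 𝕜 ω x a b - fderiv 𝕜 ω x b a

theorem oneFormExtDeriv_apply_vectorField {ω : E → E →L[𝕜] F} {v w : E → E} {x : E}
    (hω : DifferentiableAt 𝕜 ω x) (hv : DifferentiableAt 𝕜 v x) (hw : DifferentiableAt 𝕜 w x) :
    oneFormExtDeriv ω x (v x) (w x) =
      fderiv 𝕜 (fun y => ω y (w y)) x (v x) - fderiv 𝕜 (fun y => ω y (v y)) x (w x)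
        - ω x (lieBracket 𝕜 v w x) := by
  rw [fderiv_clm_apply hω hw, fderiv_clm_apply hω hv, lieBracket_eq, oneFormExtDeriv]
  simp only [add_apply, ContinuousLinearMap.comp_apply,
    ContinuousLinearMap.flip_apply, map_sub]
  abel

theorem oneFormExtDeriv_apply_of_eventually_eq_zero {ω : E → E →L[𝕜] F} {v w : E → E} {x : E}
    (hω : DifferentiableAt 𝕜 ω x) (hv : DifferentiableAt 𝕜 v x) (hw : DifferentiableAt 𝕜 w x)
    (hωv : ∀ᶠ y in 𝓝 x, ω y (v y) = 0) (hωw : ∀ᶠ y in 𝓝 x, ω y (w y) = 0) :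
    oneFormExtDeriv ω x (v x) (w x) = -ω x (lieBracket 𝕜 v w x) := by
  have hderiv {u : E → E} (hωu : ∀ᶠ y in 𝓝 x, ω y (u y) = 0) :
      fderiv 𝕜 (fun y => ω y (u y)) x = 0 :=
    (EventuallyEq.fderiv_eq hωu).trans (fderiv_const_apply 0)
  rw [oneFormExtDeriv_apply_vectorField hω hv hw, hderiv hωv, hderiv hωw]
  simp only [zero_apply, sub_self, zero_sub]

end ExteriorDerivative

section MovingFrame

variable {𝕜 M E F ι : Type*} [NontriviallyNormedField 𝕜] [NormedAddCommGroup M] [NormedSpace 𝕜 M]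
  [NormedAddCommGroup E] [NormedSpace 𝕜 E] [SeparatingDual 𝕜 E]
  [NormedAddCommGroup F] [NormedSpace 𝕜 F] [Finite ι]
  {U : Set M} {v : ι → M → E} {x : M}

theorem exists_differentiableOn_clm_apply_eq_of_linearIndependent
    (hv : ∀ k, DifferentiableOn 𝕜 (v k) U) (hindep : LinearIndependent 𝕜 (fun k => v k x)) :
    ∃ Φ : M → E →L[𝕜] E, DifferentiableOn 𝕜 Φ U ∧ Φ x = 1 ∧ ∀ y k, Φ y (v k x) = v k y := by
  classical
  have := Fintype.ofFinite ι
  choose φ hφ using fun k =>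
    exists_strongDual_apply_eq_of_linearIndependent hindep (Pi.single k (1 : 𝕜))
  refine ⟨fun y => 1 + ∑ k, (φ k).smulRight (v k y - v k x), ?_, ?_, fun y k => ?_⟩
  · have hterm (k : ι) : DifferentiableOn 𝕜 (fun y => (φ k).smulRight (v k y - v k x)) U :=
      (ContinuousLinearMap.smulRightL 𝕜 E E (φ k)).differentiable.comp_differentiableOn
        ((hv k).sub_const _)
    exact (DifferentiableOn.fun_sum fun k _ => hterm k).const_add 1
  · simp
  · simp [hφ, Pi.single_apply]

theorem exists_differentiableOn_clm_apply_eq_const [CompleteSpace E] (hU : IsOpen U)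
    (hv : ∀ k, DifferentiableOn 𝕜 (v k) U) (hx : x ∈ U)
    (hindep : LinearIndependent 𝕜 (fun k => v k x)) (f : E →L[𝕜] F) :
    ∃ V, IsOpen V ∧ V ⊆ U ∧ x ∈ V ∧ ∃ ω : M → E →L[𝕜] F,
      DifferentiableOn 𝕜 ω V ∧ ω x = f ∧ ∀ k, ∀ y ∈ V, ω y (v k y) = f (v k x) := by
  obtain ⟨Φ, hΦ, hΦx, hΦv⟩ := exists_differentiableOn_clm_apply_eq_of_linearIndependent hv hindep
  refine ⟨U ∩ Φ ⁻¹' {T | IsUnit T}, hΦ.continuousOn.isOpen_inter_preimage hU Units.isOpen,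
    Set.inter_subset_left, ⟨hx, by simp [hΦx]⟩, fun y => f ∘L (Φ y)⁻¹ʳ, ?_, ?_, ?_⟩
  · have hinv : DifferentiableOn 𝕜 (fun y => (Φ y)⁻¹ʳ) (U ∩ Φ ⁻¹' {T | IsUnit T}) :=
      fun y hy => ((hΦ.mono Set.inter_subset_left) y hy).inverse hy.2
    exact (differentiableOn_const f).clm_comp hinv
  · ext w
    simp [hΦx]
  · rintro k y ⟨-, hy⟩
    have hcancel : (Φ y)⁻¹ʳ (Φ y (v k x)) = v k x :=
      DFunLike.congr_fun (Ring.inverse_mul_cancel (Φ y) hy) (v k x)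
    rw [ContinuousLinearMap.comp_apply, ← hΦv y k, hcancel]

end MovingFrame

theorem bracket_mem_span_of_dOmega_vanishes_general
    {𝕜 E ι : Type*} [NontriviallyNormedField 𝕜] [NormedAddCommGroup E] [NormedSpace 𝕜 E]
    [SeparatingDual 𝕜 E] [CompleteSpace E] [Finite ι] {U : Set E} (hU : IsOpen U)
    {v : ι → E → E} (hv : ∀ k, DifferentiableOn 𝕜 (v k) U) {x : E} (hx : x ∈ U)
    (hindep : LinearIndependent 𝕜 (fun k => v k x)) (i j : ι)
    (H : ∀ V, IsOpen V → V ⊆ U → x ∈ V → ∀ ω : E → E →L[𝕜] 𝕜, DifferentiableOn 𝕜 ω V →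
      (∀ k, ∀ y ∈ V, ω y (v k y) = 0) → oneFormExtDeriv ω x (v i x) (v j x) = 0) :
    lieBracket 𝕜 (v i) (v j) x ∈ Submodule.span 𝕜 (Set.range fun k => v k x) := by
  by_contra hbracket
  have : FiniteDimensional 𝕜 (Submodule.span 𝕜 (Set.range fun k => v k x)) :=
    FiniteDimensional.span_of_finite 𝕜 (Set.finite_range _)
  obtain ⟨f, hf_bracket, hf_span⟩ := exists_strongDual_ne_zero_of_notMem hbracket
  obtain ⟨V, hVo, hVU, hxV, ω, hω, hωx, hωv⟩ :=
    exists_differentiableOn_clm_apply_eq_const hU hv hx hindep f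
  have hannih (k : ι) : ∀ y ∈ V, ω y (v k y) = 0 := fun y hy =>
    (hωv k y hy).trans (hf_span _ (Submodule.subset_span ⟨k, rfl⟩))
  have hV : V ∈ 𝓝 x := hVo.mem_nhds hxV
  have hv_at (k : ι) : DifferentiableAt 𝕜 (v k) x := (hv k).differentiableAt (hU.mem_nhds hx)
  have hcartan : oneFormExtDeriv ω x (v i x) (v j x) = -f (lieBracket 𝕜 (v i) (v j) x) := hωx ▸
    oneFormExtDeriv_apply_of_eventually_eq_zero (hω.differentiableAt hV) (hv_at i) (hv_at j)
      (eventually_of_mem hV (hannih i)) (eventually_of_mem hV (hannih j))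
  exact hf_bracket (neg_eq_zero.1 (hcartan.symm.trans (H V hVo hVU hxV ω hω hannih)))

/-- Converse implication of Proposition 2.2 in the regular case: if the pointwise
linearly independent holomorphic vector fields `v₁, …, v_r` on an open set
`U ⊆ ℂⁿ` are such that every local holomorphic 1-form annihilating them has
exterior derivative vanishing on them, then all brackets `[vᵢ,vⱼ](x)` lie in the
span of `{v₁(x), …, v_r(x)}`. -/
theorem bracket_mem_span_of_dOmega_vanishes
    {n r : ℕ} (U : Set (Fin n → ℂ)) (hU : IsOpen U)
    (v : Fin r → (Fin n → ℂ) → (Fin n → ℂ))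
    (hv : ∀ i, DifferentiableOn ℂ (v i) U)
    (hindep : ∀ x ∈ U, LinearIndependent ℂ (fun i => v i x))
    (H : ∀ (V : Set (Fin n → ℂ)), IsOpen V → V ⊆ U →
      ∀ ω : (Fin n → ℂ) → ((Fin n → ℂ) →L[ℂ] ℂ), DifferentiableOn ℂ ω V →
        (∀ (i : Fin r), ∀ y ∈ V, ω y (v i y) = 0) →
        ∀ x ∈ V, ∀ i j : Fin r,
          (fderiv ℂ ω x (v i x)) (v j x) - (fderiv ℂ ω x (v j x)) (v i x) = 0) :
    ∀ x ∈ U, ∀ i j : Fin r,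
      (fderiv ℂ (v j) x (v i x) - fderiv ℂ (v i) x (v j x))
        ∈ Submodule.span ℂ (Set.range fun k => v k x) := by
  intro x hx i j
  exact bracket_mem_span_of_dOmega_vanishes_general hU hv hx (hindep x hx) i j
    fun V hVo hVU hxV ω hω hannih => H V hVo hVU ω hω hannih x hxV i j
end

section
/- Let R be a commutative ℂ-algebra, let ε : R →ₐ[ℂ] ℂ be a ℂ-algebra homomorphism, let r be a natural number, and let v₁, …, v_r be ℂ-linear derivations of R such that ε(vⱼ(f)) = 0 for every f ∈ R and every j. Then there exist no ℂ-linear endomorphisms A₁, …, A_r, B₁, …, B_r of R such that the identity map of R equals Σⱼ (vⱼ ∘ Aⱼ + Bⱼ ∘ vⱼ). -/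
theorem map_sum_comp_add_comp_apply_eq_zero
    {k M M' N ι : Type*} [Semiring k] [AddCommMonoid M] [AddCommMonoid M'] [AddCommMonoid N]
    [Module k M] [Module k M'] [Module k N] [Fintype ι]
    (φ : M' →ₗ[k] N) (x : M) (v : ι → M →ₗ[k] M') (hφ : ∀ j y, φ (v j y) = 0)
    (hx : ∀ j, v j x = 0) (A : ι → M →ₗ[k] M) (B : ι → M' →ₗ[k] M') :
    φ ((∑ j, (v j ∘ₗ A j + B j ∘ₗ v j)) x) = 0 := by
  rw [LinearMap.sum_apply, map_sum]
  refine Finset.sum_eq_zero fun j _ => ?_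
  calc φ (v j (A j x) + B j (v j x))
      = φ (v j (A j x)) := by rw [hx, map_zero, add_zero]
    _ = 0 := hφ j (A j x)

theorem no_decomposition_of_id_derivations_general
    {k R N ι : Type*} [CommSemiring k] [CommRing R] [Algebra k R] [AddCommMonoid N] [Module k N]
    [Fintype ι] (φ : R →ₗ[k] N) (hφ : φ 1 ≠ 0) (v : ι → Derivation k R R)
    (hv : ∀ j f, φ (v j f) = 0) :
    ¬ ∃ A B : ι → R →ₗ[k] R,
        LinearMap.id = ∑ j, ((v j).toLinearMap ∘ₗ A j + B j ∘ₗ (v j).toLinearMap) := by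
  rintro ⟨A, B, id_eq⟩
  have map_sum_one : φ ((∑ j, ((v j).toLinearMap ∘ₗ A j + B j ∘ₗ (v j).toLinearMap)) 1) = 0 :=
    map_sum_comp_add_comp_apply_eq_zero φ 1 (fun j => (v j).toLinearMap) hv
      (fun j => (v j).map_one_eq_zero) A B
  rw [← id_eq, LinearMap.id_apply] at map_sum_one
  exact hφ map_sum_one

/-- Step (B) of Theorem 3.6: if `v₁, …, v_r` are derivations of a commutative
`ℂ`-algebra `R` whose values all lie in the kernel of a character
`ε : R →ₐ[ℂ] ℂ`, then the identity of `R` cannot be written as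
`Σⱼ (vⱼ ∘ Aⱼ + Bⱼ ∘ vⱼ)` with `Aⱼ, Bⱼ` `ℂ`-linear endomorphisms of `R`. -/
theorem no_decomposition_of_id_derivations
    {R : Type*} [CommRing R] [Algebra ℂ R]
    (ε : R →ₐ[ℂ] ℂ) {r : ℕ} (v : Fin r → Derivation ℂ R R)
    (hv : ∀ (j : Fin r) (f : R), ε (v j f) = 0) :
    ¬ ∃ A B : Fin r → (R →ₗ[ℂ] R),
        (LinearMap.id : R →ₗ[ℂ] R) =
          ∑ j : Fin r, ((v j).toLinearMap ∘ₗ A j + B j ∘ₗ (v j).toLinearMap) :=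
  no_decomposition_of_id_derivations_general ε.toLinearMap ((map_one ε).trans_ne one_ne_zero) v hv
end

section
/- Let R = ℂ[x₁, …, xₙ] be the multivariate polynomial ring (MvPolynomial over Fin n and ℂ), let r be a natural number, and let v₁, …, v_r be ℂ-linear derivations of R such that for every j and every variable xᵢ, the polynomial vⱼ(xᵢ) has zero constant term (i.e., evaluates to 0 at the origin). Then there exist no ℂ-linear endomorphisms A₁, …, A_r, B₁, …, B_r of R such that the identity map of R equals Σⱼ (vⱼ ∘ Aⱼ + Bⱼ ∘ vⱼ). -/
/-!
Derivations kill `1`, so a sum `∑ j, (v j ∘ A j + B j ∘ v j)` sends `1` to `∑ j, v j (A j 1)`.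
By the Leibniz rule each `v j` takes all its values in an ideal as soon as it does so on
generators. If that ideal is proper, for instance the maximal ideal of the origin, the sum cannot
fix `1`.
-/

theorem derivation_mem_of_adjoin_eq_top {R A M : Type*} [CommSemiring R] [CommSemiring A]
    [Algebra R A] [AddCommMonoid M] [Module A M] [Module R M] (D : Derivation R A M)
    (N : Submodule A M) {s : Set A} (hs : Algebra.adjoin R s = ⊤) (hD : ∀ x ∈ s, D x ∈ N) (a : A) :
    D a ∈ N := by
  have ha : a ∈ Algebra.adjoin R s := hs ▸ Algebra.mem_top
  induction ha using Algebra.adjoin_induction with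
  | mem x hx => exact hD x hx
  | algebraMap c => exact D.map_algebraMap c ▸ N.zero_mem
  | add x y _ _ hx hy => exact D.map_add x y ▸ N.add_mem hx hy
  | mul x y _ _ hx hy =>
    exact D.leibniz x y ▸ N.add_mem (N.smul_mem x hy) (N.smul_mem y hx)

theorem sum_comp_add_comp_apply_mem {R M ι : Type*} [Semiring R] [AddCommMonoid M] [Module R M]
    [Fintype ι] (f A B : ι → M →ₗ[R] M) (N : Submodule R M) (hf : ∀ j m, f j m ∈ N) {x : M}
    (hx : ∀ j, f j x = 0) : (∑ j, (f j ∘ₗ A j + B j ∘ₗ f j)) x ∈ N := by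
  have sum_apply : (∑ j, (f j ∘ₗ A j + B j ∘ₗ f j)) x = ∑ j, f j (A j x) := by
    simp only [LinearMap.sum_apply, LinearMap.add_apply, LinearMap.comp_apply, hx, map_zero,
      add_zero]
  exact sum_apply ▸ N.sum_mem fun j _ => hf j (A j x)

theorem no_decomposition_of_id_mvPolynomial_general {R S ι : Type*} [CommSemiring R]
    [CommSemiring S] [Algebra R S] [Fintype ι] (v : ι → Derivation R S S) {s : Set S}
    (hs : Algebra.adjoin R s = ⊤) {I : Ideal S} (hI : I ≠ ⊤) (hv : ∀ j, ∀ x ∈ s, v j x ∈ I) :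
    ¬ ∃ A B : ι → (S →ₗ[R] S),
        (LinearMap.id : S →ₗ[R] S) =
          ∑ j, ((v j).toLinearMap ∘ₗ A j + B j ∘ₗ (v j).toLinearMap) := by
  rintro ⟨A, B, id_eq⟩
  have v_mem : ∀ j p, v j p ∈ I := fun j => derivation_mem_of_adjoin_eq_top (v j) I hs (hv j)
  have sum_one_mem := sum_comp_add_comp_apply_mem (fun j => (v j).toLinearMap) A B
    (I.restrictScalars R) v_mem (x := 1) fun j => (v j).map_one_eq_zero
  have one_mem : (1 : S) ∈ I := by rwa [← id_eq] at sum_one_mem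
  exact hI (I.eq_top_iff_one.mpr one_mem)

/-- Concrete form of step (B) of Theorem 3.6 on `X = ℂⁿ`: if `v₁, …, v_r` are
derivations of `ℂ[x₁, …, xₙ]` whose values on the variables all vanish at the
origin, then the identity map cannot be written as `Σⱼ (vⱼ ∘ Aⱼ + Bⱼ ∘ vⱼ)`
with `Aⱼ, Bⱼ` `ℂ`-linear endomorphisms. -/
theorem no_decomposition_of_id_mvPolynomial
    {n : ℕ} {r : ℕ}
    (v : Fin r → Derivation ℂ (MvPolynomial (Fin n) ℂ) (MvPolynomial (Fin n) ℂ))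
    (hv : ∀ (j : Fin r) (i : Fin n),
      MvPolynomial.eval (0 : Fin n → ℂ) (v j (MvPolynomial.X i)) = 0) :
    ¬ ∃ A B : Fin r → (MvPolynomial (Fin n) ℂ →ₗ[ℂ] MvPolynomial (Fin n) ℂ),
        (LinearMap.id : MvPolynomial (Fin n) ℂ →ₗ[ℂ] MvPolynomial (Fin n) ℂ) =
          ∑ j : Fin r, ((v j).toLinearMap ∘ₗ A j + B j ∘ₗ (v j).toLinearMap) :=
  no_decomposition_of_id_mvPolynomial_general v MvPolynomial.adjoin_range_X
    (RingHom.ker_ne_top (MvPolynomial.eval 0)) fun j => Set.forall_mem_range.mpr (hv j)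
end

section
/- Let D be a (possibly noncommutative) ring and let v₁, v₂ ∈ D be elements with v₁v₂ = v₂v₁. Assume that right multiplication by v₁ is injective on D, right multiplication by v₂ is injective on D, and the map induced by right multiplication by v₂ on the quotient additive group D/Dv₁ (well-defined since v₁v₂ = v₂v₁) is injective. Let M = D/(Dv₁ + Dv₂) be the quotient of D by the left ideal generated by v₁ and v₂. Then there is an isomorphism of abelian groups Ext²_D(M, M) ≅ D/(Dv₁ + Dv₂ + v₁D + v₂D), where Dv₁ + Dv₂ + v₁D + v₂D denotes the additive subgroup of D generated by all elements d·v₁, d·v₂, v₁·d, v₂·d for d ∈ D. -/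
open CategoryTheory

universe u

/-!
Regularity of `v₁, v₂` makes the Koszul complex `0 → D → D² → D → D/(Dv₁ + Dv₂) → 0`, with
differentials `d ↦ (-d v₂, d v₁)` and `(a, b) ↦ a v₁ + b v₂`, a free resolution. Under
`Hom_D(D, N) = N` and `Hom_D(D², N) = N²`, applying `Hom_D(-, N)` turns the leftmost differential
into `(n₁, n₂) ↦ v₁ n₂ - v₂ n₁`, whose cokernel `N/(v₁N + v₂N)` is therefore
`Ext²(D/(Dv₁ + Dv₂), N)`. For `N = D/(Dv₁ + Dv₂)` the third isomorphism theorem rewrites this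
cokernel as a quotient of `D`.
-/

section LengthTwoResolution

open Limits ZeroObject

universe v w

variable {C : Type w} [Category.{v} C] [Abelian C]

/-- A chain complex `K` of projective objects which is exact in positive degrees, with an
augmentation `ε` exhibiting `X` as the cokernel of `K.d 1 0`, as a projective resolution of `X`. -/
noncomputable def projectiveResolutionOfExact {X : C} (K : ChainComplex C ℕ)
    [∀ n, Projective (K.X n)] (ε : K.X 0 ⟶ X) [hε : Epi ε] (w : K.d 1 0 ≫ ε = 0)
    (exact_zero : (ShortComplex.mk _ ε w).Exact) (exactAt_succ : ∀ n, K.ExactAt (n + 1)) :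
    ProjectiveResolution X where
  complex := K
  π := (K.toSingle₀Equiv X).symm ⟨ε, w⟩
  quasiIso := ⟨fun n => by
    cases n with
    | zero =>
      have hπ : ((K.toSingle₀Equiv X).symm ⟨ε, w⟩).f 0 = ε :=
        K.toSingle₀Equiv_symm_apply_f_zero ε w
      rw [ChainComplex.quasiIsoAt₀_iff,
        ShortComplex.quasiIso_iff_of_zeros' _ (K.shape 0 0 (by simp)) rfl rfl]
      exact ⟨by simpa [hπ] using! exact_zero, by simpa [hπ] using! hε⟩
    | succ n =>
      exact (quasiIsoAt_iff_exactAt' _ _ (ChainComplex.exactAt_succ_single_obj _ _)).2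
        (exactAt_succ n)⟩

/-- `Ext^(n + 1)(X, Y)` as the cokernel of `Hom(Pₙ, Y) → Hom(Pₙ₊₁, Y)`, when the differential
`Pₙ₊₂ ⟶ Pₙ₊₁` of the projective resolution `P` of `X` vanishes. -/
noncomputable def extSuccEquivOfDEqZero {R : Type*} [Ring R] [Linear R C] [EnoughProjectives C]
    {X : C} (P : ProjectiveResolution X) (n : ℕ) (hd : P.complex.d (n + 2) (n + 1) = 0) (Y : C) :
    ((Ext R C (n + 1)).obj (.op X)).obj Y ≃ₗ[R]
      (P.complex.X (n + 1) ⟶ Y) ⧸ (Linear.leftComp R Y (P.complex.d (n + 1) n)).range :=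
  let K := P.complex.linearYonedaObj R Y
  let S := K.sc' n (n + 1) (n + 2)
  have hg : S.g = 0 := by
    ext f
    exact (congrArg (· ≫ f) hd).trans zero_comp
  have := S.isIso_homologyι hg
  (P.isoExt (n + 1) Y ≪≫
    ShortComplex.homologyMapIso (K.isoSc' n (n + 1) (n + 2) (by simp) (by simp)) ≪≫
    asIso S.homologyι ≪≫ S.moduleCatOpcyclesIso).toLinearEquiv

variable {P₀ P₁ P₂ X : C} (d₂ : P₂ ⟶ P₁) (d₁ : P₁ ⟶ P₀) (w : d₂ ≫ d₁ = 0)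

/-- The chain complex `⋯ ⟶ 0 ⟶ P₂ ⟶ P₁ ⟶ P₀`. -/
noncomputable def chainComplexOfLengthTwo : ChainComplex C ℕ :=
  ChainComplex.mk P₀ P₁ P₂ d₁ d₂ w fun _ => ⟨0, 0, zero_comp⟩

lemma chainComplexOfLengthTwo_exactAt_succ [Mono d₂]
    (h : (ShortComplex.mk d₂ d₁ w).Exact) (n : ℕ) :
    (chainComplexOfLengthTwo d₂ d₁ w).ExactAt (n + 1) := by
  rw [HomologicalComplex.exactAt_iff' _ (n + 2) (n + 1) n (by simp) (by simp)]
  match n with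
  | 0 => simpa [HomologicalComplex.sc', HomologicalComplex.shortComplexFunctor',
      chainComplexOfLengthTwo] using h
  | 1 =>
    rw [ShortComplex.exact_iff_mono _ ((isZero_zero C).eq_of_src _ _)]
    simpa [chainComplexOfLengthTwo] using! ‹Mono d₂›
  | n + 2 => exact ShortComplex.exact_of_isZero_X₂ _ (isZero_zero C)

instance chainComplexOfLengthTwo_projective [Projective P₀] [Projective P₁] [Projective P₂] :
    ∀ n, Projective ((chainComplexOfLengthTwo d₂ d₁ w).X n)
  | 0 => ‹Projective P₀›
  | 1 => ‹Projective P₁›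
  | 2 => ‹Projective P₂›
  | _ + 3 => (isZero_zero C).projective

/-- The projective resolution attached to an exact sequence `0 ⟶ P₂ ⟶ P₁ ⟶ P₀ ⟶ X ⟶ 0` with
`P₀`, `P₁`, `P₂` projective. -/
noncomputable def projectiveResolutionOfLengthTwo
    [Projective P₀] [Projective P₁] [Projective P₂] (ε : P₀ ⟶ X) (w' : d₁ ≫ ε = 0)
    [Mono d₂] [hε : Epi ε] (exact₁ : (ShortComplex.mk d₂ d₁ w).Exact)
    (exact₀ : (ShortComplex.mk d₁ ε w').Exact) : ProjectiveResolution X :=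
  have hd₁ : (chainComplexOfLengthTwo d₂ d₁ w).d 1 0 = d₁ := ChainComplex.mk_d_1_0 ..
  projectiveResolutionOfExact (chainComplexOfLengthTwo d₂ d₁ w) ε (hε := hε)
    ((congrArg (· ≫ ε) hd₁).trans w') (by simpa only [hd₁] using! exact₀)
    (chainComplexOfLengthTwo_exactAt_succ d₂ d₁ w exact₁)

/-- The computation of `Ext²(X, Y)` as the cokernel of `Hom(P₁, Y) → Hom(P₂, Y)` from a projective
resolution `0 ⟶ P₂ ⟶ P₁ ⟶ P₀ ⟶ X ⟶ 0`. -/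
noncomputable def extTwoEquivOfLengthTwo (R : Type*) [Ring R] [Linear R C] [EnoughProjectives C]
    [Projective P₀] [Projective P₁] [Projective P₂] (ε : P₀ ⟶ X) (w' : d₁ ≫ ε = 0)
    [Mono d₂] [Epi ε] (exact₁ : (ShortComplex.mk d₂ d₁ w).Exact)
    (exact₀ : (ShortComplex.mk d₁ ε w').Exact) (Y : C) :
    ((Ext R C 2).obj (.op X)).obj Y ≃ₗ[R] (P₂ ⟶ Y) ⧸ (Linear.leftComp R Y d₂).range :=
  let P := projectiveResolutionOfLengthTwo d₂ d₁ w ε w' exact₁ exact₀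
  have hd₂ : P.complex.d 2 1 = d₂ := ChainComplex.mk_d_2_1 ..
  have hd₃ : P.complex.d 3 2 = 0 := (isZero_zero C).eq_of_src _ _
  (extSuccEquivOfDEqZero P 1 hd₃ Y).trans
    (Submodule.quotEquivOfEq _ _
      (congrArg (fun d : P₂ ⟶ P₁ => (Linear.leftComp R Y d).range) hd₂))

end LengthTwoResolution

section SMulTop

open Pointwise

variable {R A B : Type*} [Monoid R] [AddCommGroup A] [DistribMulAction R A]
  [AddCommGroup B] [DistribMulAction R B]

lemma mem_smul_top_sup_smul_top {r s : R} {x : A} :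
    x ∈ r • (⊤ : AddSubgroup A) ⊔ s • ⊤ ↔ ∃ a b, r • a + s • b = x := by
  simp [AddSubgroup.mem_sup, AddSubgroup.mem_smul_pointwise_iff_exists]

lemma map_smul_top_of_surjective {F : Type*} [FunLike F A B] [DistribMulActionHomClass F R A B]
    (f : F) (hf : Function.Surjective f) (r : R) :
    (r • (⊤ : AddSubgroup A)).map (f : A →+ B) = r • ⊤ := by
  ext x
  simp [AddSubgroup.mem_smul_pointwise_iff_exists, hf.exists, map_smul]

end SMulTop

section QuotientSpan

open Pointwise

variable {D : Type*} [Ring D]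

lemma closure_mul_eq_span_sup_smul_top (v₁ v₂ : D) :
    AddSubgroup.closure {x : D | ∃ d : D, x = d * v₁ ∨ x = d * v₂ ∨ x = v₁ * d ∨ x = v₂ * d} =
      (Submodule.span D {v₁, v₂}).toAddSubgroup ⊔ (v₁ • ⊤ ⊔ v₂ • ⊤) := by
  apply le_antisymm
  · rw [AddSubgroup.closure_le]
    rintro _ ⟨d, rfl | rfl | rfl | rfl⟩
    · exact AddSubgroup.mem_sup_left (Submodule.mem_span_pair.2 ⟨d, 0, by simp⟩)
    · exact AddSubgroup.mem_sup_left (Submodule.mem_span_pair.2 ⟨0, d, by simp⟩)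
    · exact AddSubgroup.mem_sup_right (mem_smul_top_sup_smul_top.2 ⟨d, 0, by simp⟩)
    · exact AddSubgroup.mem_sup_right (mem_smul_top_sup_smul_top.2 ⟨0, d, by simp⟩)
  · refine sup_le (fun x hx => ?_) fun x hx => ?_
    · obtain ⟨a, b, rfl⟩ := Submodule.mem_span_pair.1 hx
      exact add_mem (AddSubgroup.subset_closure ⟨a, by simp⟩)
        (AddSubgroup.subset_closure ⟨b, by simp⟩)
    · obtain ⟨a, b, rfl⟩ := mem_smul_top_sup_smul_top.1 hx
      exact add_mem (AddSubgroup.subset_closure ⟨a, by simp⟩)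
        (AddSubgroup.subset_closure ⟨b, by simp⟩)

/-- `M/(v₁M + v₂M)` for `M = D/(Dv₁ + Dv₂)`, as the quotient of `D` by the additive subgroup
`Dv₁ + Dv₂ + v₁D + v₂D`. -/
noncomputable def quotientSpanQuotientSMulEquiv (v₁ v₂ : D) :
    ((D ⧸ Submodule.span D {v₁, v₂}) ⧸
      (v₁ • (⊤ : AddSubgroup (D ⧸ Submodule.span D {v₁, v₂})) ⊔ v₂ • ⊤)) ≃+
    D ⧸ AddSubgroup.closure
      {x : D | ∃ d : D, x = d * v₁ ∨ x = d * v₂ ∨ x = v₁ * d ∨ x = v₂ * d} :=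
  let I := Submodule.span D {v₁, v₂}
  let S := AddSubgroup.closure
    {x : D | ∃ d : D, x = d * v₁ ∨ x = d * v₂ ∨ x = v₁ * d ∨ x = v₂ * d}
  have hIS : I.toAddSubgroup ≤ S :=
    le_sup_left.trans_eq (closure_mul_eq_span_sup_smul_top v₁ v₂).symm
  have hmap : S.map (I.mkQ : D →+ D ⧸ I) = v₁ • ⊤ ⊔ v₂ • ⊤ := by
    have hI : I.toAddSubgroup.map (I.mkQ : D →+ D ⧸ I) = ⊥ :=
      (AddSubgroup.map_eq_bot_iff _).2 fun x hx => by simpa using! hx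
    rw [show S = _ from closure_mul_eq_span_sup_smul_top v₁ v₂, AddSubgroup.map_sup, hI,
      AddSubgroup.map_sup, map_smul_top_of_surjective _ I.mkQ_surjective,
      map_smul_top_of_surjective _ I.mkQ_surjective, bot_sup_eq]
  (QuotientAddGroup.quotientAddEquivOfEq hmap.symm).trans
    (QuotientAddGroup.quotientQuotientEquivQuotient I.toAddSubgroup S hIS)

end QuotientSpan

section Koszul

variable {D : Type*} [Ring D] (v₁ v₂ : D)

/-- The Koszul differential `d ↦ (-d v₂, d v₁)`. -/
def koszulMap₂ : D →ₗ[D] D × D :=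
  (LinearMap.toSpanSingleton D D (-v₂)).prod (LinearMap.toSpanSingleton D D v₁)

/-- The Koszul differential `(a, b) ↦ a v₁ + b v₂`. -/
def koszulMap₁ : D × D →ₗ[D] D :=
  (LinearMap.toSpanSingleton D D v₁).coprod (LinearMap.toSpanSingleton D D v₂)

@[simp]
lemma koszulMap₂_apply (d : D) : koszulMap₂ v₁ v₂ d = (-(d * v₂), d * v₁) := by
  simp [koszulMap₂]

@[simp]
lemma koszulMap₁_apply (x : D × D) : koszulMap₁ v₁ v₂ x = x.1 * v₁ + x.2 * v₂ := by
  simp [koszulMap₁]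

lemma map_koszulMap₂_one {N : Type*} [AddCommGroup N] [Module D N] (y : D × D →ₗ[D] N) :
    y (koszulMap₂ v₁ v₂ 1) = v₁ • y (0, 1) + v₂ • y (-1, 0) := by
  simp [← map_smul, ← map_add]

lemma exact_koszulMap₁_mkQ :
    Function.Exact (koszulMap₁ v₁ v₂) (Submodule.span D {v₁, v₂}).mkQ := by
  rw [LinearMap.exact_iff, Submodule.ker_mkQ, koszulMap₁, LinearMap.range_coprod,
    LinearMap.range_toSpanSingleton, LinearMap.range_toSpanSingleton, Submodule.span_insert]

variable {v₁ v₂}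

lemma koszulMap₂_injective (hinj₁ : IsRightRegular v₁) :
    Function.Injective (koszulMap₂ v₁ v₂) := fun x y hxy =>
  hinj₁ (by simpa using congrArg Prod.snd hxy)

lemma exact_koszulMap₂_koszulMap₁ (hcomm : v₁ * v₂ = v₂ * v₁) (hinj₁ : IsRightRegular v₁)
    (hinj₂' : ∀ d : D, d * v₂ ∈ Submodule.span D {v₁} → d ∈ Submodule.span D {v₁}) :
    Function.Exact (koszulMap₂ v₁ v₂) (koszulMap₁ v₁ v₂) := by
  rintro ⟨a, b⟩
  constructor
  · intro hab
    replace hab : a * v₁ + b * v₂ = 0 := by simpa using hab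
    have hb : b * v₂ ∈ Submodule.span D {v₁} :=
      Submodule.mem_span_singleton.2 ⟨-a, by simpa using neg_eq_of_add_eq_zero_right hab⟩
    obtain ⟨c, rfl⟩ := Submodule.mem_span_singleton.1 (hinj₂' b hb)
    have ha : a = -(c * v₂) := hinj₁ <| calc
      a * v₁ = -(c * v₁ * v₂) := eq_neg_of_add_eq_zero_left hab
      _ = -(c * v₂) * v₁ := by rw [neg_mul, mul_assoc, mul_assoc, hcomm]
    exact ⟨c, by simp [ha]⟩
  · rintro ⟨c, hc⟩
    rw [← hc]
    simp [mul_assoc, hcomm]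

end Koszul

section ExtTwo

open Pointwise

/-- Evaluation at `1`, as an isomorphism `Hom_D(D, N) ≃+ N`. -/
def homSelfAddEquiv (D : Type u) [Ring D] (N : ModuleCat.{u} D) :
    (ModuleCat.of D D ⟶ N) ≃+ N :=
  ModuleCat.homAddEquiv.trans (LinearMap.ringLmapEquivSelf D ℤ N).toAddEquiv

lemma map_homSelfAddEquiv_range_koszulMap₂ {D : Type u} [Ring D] (v₁ v₂ : D)
    (N : ModuleCat.{u} D) :
    (Linear.leftComp ℤ N (ModuleCat.ofHom (koszulMap₂ v₁ v₂))).range.toAddSubgroup.map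
      (homSelfAddEquiv D N : _ →+ N) = v₁ • ⊤ ⊔ v₂ • ⊤ := by
  ext n
  rw [mem_smul_top_sup_smul_top]
  constructor
  · rintro ⟨_, ⟨y, rfl⟩, rfl⟩
    exact ⟨_, _, (map_koszulMap₂_one v₁ v₂ y.hom).symm⟩
  · rintro ⟨a, b, rfl⟩
    let y : D × D →ₗ[D] N :=
      (LinearMap.toSpanSingleton D N (-b)).coprod (LinearMap.toSpanSingleton D N a)
    refine ⟨_, ⟨ModuleCat.ofHom y, rfl⟩, (map_koszulMap₂_one v₁ v₂ y).trans ?_⟩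
    simp [y]

theorem ext_two_koszul_iso_general
    {D : Type u} [Ring D] {v₁ v₂ : D} (hcomm : v₁ * v₂ = v₂ * v₁)
    (hinj₁ : Function.Injective (fun d : D => d * v₁))
    (hinj₂' : ∀ d : D, d * v₂ ∈ (Submodule.span D {v₁} : Submodule D D) →
      d ∈ (Submodule.span D {v₁} : Submodule D D)) (N : ModuleCat.{u} D) :
    Nonempty
      (((Ext ℤ (ModuleCat.{u} D) 2).obj
          (.op (ModuleCat.of D (D ⧸ (Submodule.span D {v₁, v₂} : Submodule D D))))).obj N ≃+
        N ⧸ (v₁ • (⊤ : AddSubgroup N) ⊔ v₂ • ⊤)) := by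
  let I := Submodule.span D {v₁, v₂}
  have exact₁ := exact_koszulMap₂_koszulMap₁ hcomm hinj₁ hinj₂'
  have exact₀ := exact_koszulMap₁_mkQ v₁ v₂
  have : Mono (ModuleCat.ofHom (koszulMap₂ v₁ v₂)) :=
    (ModuleCat.mono_iff_injective _).2 (koszulMap₂_injective hinj₁)
  have : Epi (ModuleCat.ofHom I.mkQ) := (ModuleCat.epi_iff_surjective _).2 I.mkQ_surjective
  let e := extTwoEquivOfLengthTwo (ModuleCat.ofHom (koszulMap₂ v₁ v₂))
    (ModuleCat.ofHom (koszulMap₁ v₁ v₂)) (ModuleCat.hom_ext exact₁.linearMap_comp_eq_zero) ℤ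
    (ModuleCat.ofHom I.mkQ) (ModuleCat.hom_ext exact₀.linearMap_comp_eq_zero)
    ((ShortComplex.moduleCat_exact_iff_range_eq_ker _).2 (LinearMap.exact_iff.1 exact₁).symm)
    ((ShortComplex.moduleCat_exact_iff_range_eq_ker _).2 (LinearMap.exact_iff.1 exact₀).symm) N
  exact ⟨e.toAddEquiv.trans (QuotientAddGroup.congr _ _ (homSelfAddEquiv D N)
    (map_homSelfAddEquiv_range_koszulMap₂ v₁ v₂ N))⟩

end ExtTwo

/-- For commuting elements `v₁, v₂` of a ring `D` forming a regular sequence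
(right multiplications injective, and right multiplication by `v₂` injective on
`D/Dv₁`), with `M = D/(Dv₁ + Dv₂)`, one has
`Ext²_D(M, M) ≅ D/(Dv₁ + Dv₂ + v₁D + v₂D)` as abelian groups. -/
theorem ext_two_koszul_iso
    (D : Type u) [Ring D] (v₁ v₂ : D) (hcomm : v₁ * v₂ = v₂ * v₁)
    (hinj₁ : Function.Injective (fun d : D => d * v₁))
    (hinj₂ : Function.Injective (fun d : D => d * v₂))
    (hinj₂' : ∀ d : D, d * v₂ ∈ (Submodule.span D {v₁} : Submodule D D) →
      d ∈ (Submodule.span D {v₁} : Submodule D D)) :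
    Nonempty
      ((((Ext ℤ (ModuleCat.{u} D) 2).obj
            (Opposite.op (ModuleCat.of D
              (D ⧸ (Submodule.span D {v₁, v₂} : Submodule D D))))).obj
          (ModuleCat.of D (D ⧸ (Submodule.span D {v₁, v₂} : Submodule D D)))) ≃+
        (D ⧸ AddSubgroup.closure
          {x : D | ∃ d : D, x = d * v₁ ∨ x = d * v₂ ∨ x = v₁ * d ∨ x = v₂ * d})) :=
  (ext_two_koszul_iso_general hcomm hinj₁ hinj₂' _).map
    (·.trans (quotientSpanQuotientSMulEquiv v₁ v₂))
end
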